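/- arXiv:2309.05105 — 5 statements merged into one kernel-verified Lean document; each statement's English description precedes it below -/
import Mathlib

section
/- (Manne LP characterization.) For any probability mass function μ on Z, the function Q* solves the convex program: maximize ⟨μ,Q⟩ over all Q : Z → ℝ subject to Q(z) ≤ c(z) + γ Σ_{x'} P_u(x,x') Q̲(x') for every z = (x,u) ∈ Z. That is, Q* is feasible, and every feasible Q satisfies ⟨μ,Q⟩ ≤ ⟨μ,Q*⟩. -/
open Finset

/-!
The Bellman operator satisfies Blackwell's conditions: it is monotone, and adding a constant `d ≥ 0`
to its argument raises its value by at most `γ * d`. These give a comparison principle by a maximum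
argument: if `Q ≤ T Q`, `T R ≤ R` and the largest gap `d = Q z₀ - R z₀` were positive, then
`Q ≤ R + d` would give `Q z₀ ≤ T (R + d) z₀ ≤ R z₀ + γ * d`, that is `d ≤ γ * d < d`. Hence `Q*`
dominates every feasible `Q` pointwise, and so in the mean for every nonnegative weight.
-/

section Comparison

variable {K Z : Type*} [Ring K] [LinearOrder K] [IsStrictOrderedRing K] [Finite Z]

theorem le_of_le_map_of_map_le_of_discounting {T : (Z → K) → Z → K} {γ : K} (hγ1 : γ < 1)
    (hmono : Monotone T)
    (hdisc : ∀ (Q : Z → K) (d : K), 0 ≤ d →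
      T (Q + Function.const Z d) ≤ T Q + Function.const Z (γ * d))
    {Q R : Z → K} (hQ : Q ≤ T Q) (hR : T R ≤ R) : Q ≤ R := by
  intro z
  have : Nonempty Z := ⟨z⟩
  obtain ⟨z₀, hz₀⟩ := Finite.exists_max fun z => Q z - R z
  set d := Q z₀ - R z₀
  suffices d_nonpos : d ≤ 0 from sub_nonpos.mp ((hz₀ z).trans d_nonpos)
  by_contra! d_pos
  have Q_le : Q ≤ R + Function.const Z d := fun z => sub_le_iff_le_add'.mp (hz₀ z)
  have Q_z₀_le : Q z₀ ≤ R z₀ + γ * d :=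
    calc Q z₀ ≤ T Q z₀ := hQ z₀
      _ ≤ T (R + Function.const Z d) z₀ := hmono Q_le z₀
      _ ≤ T R z₀ + γ * d := hdisc R d d_pos.le z₀
      _ ≤ R z₀ + γ * d := by gcongr; exact hR z₀
  have d_le : d ≤ γ * d := sub_le_iff_le_add'.mpr Q_z₀_le
  exact (mul_lt_of_lt_one_left d_pos hγ1).not_ge d_le

end Comparison

section MinOverActions

variable {K X U : Type*} [Fintype U] [Nonempty U]

/-- The minimum `Q̲ x = min_u Q (x, u)` of a state-action function `Q` over the actions. -/
def minOverActions [SemilatticeInf K] (Q : X × U → K) (x : X) : K :=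
  univ.inf' univ_nonempty fun u => Q (x, u)

theorem minOverActions_mono [SemilatticeInf K] :
    Monotone (minOverActions : (X × U → K) → X → K) :=
  fun _ _ hQR x => inf'_mono_fun fun u _ => hQR (x, u)

theorem minOverActions_add_const [AddGroup K] [Lattice K] [AddRightMono K]
    (Q : X × U → K) (d : K) :
    minOverActions (Q + Function.const _ d) = minOverActions Q + Function.const X d :=
  funext fun _ => (map_finset_inf' (OrderIso.addRight d) univ_nonempty _).symm

end MinOverActions

section Bellman

variable {K X U : Type*} [Ring K] [LinearOrder K] [Fintype X] [Fintype U] [Nonempty U]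

/-- The Bellman operator `T` with transition weights `P u x x'`, cost `c` and discount factor `γ`,
acting on state-action functions. -/
def bellman (P : U → X → X → K) (c : X × U → K) (γ : K) (Q : X × U → K) : X × U → K :=
  fun z => c z + γ * ∑ x', P z.2 z.1 x' * minOverActions Q x'

variable {P : U → X → X → K} {c : X × U → K} {γ : K}

theorem bellman_mono [IsOrderedRing K] (hP0 : ∀ u x x', 0 ≤ P u x x') (hγ0 : 0 ≤ γ) :
    Monotone (bellman P c γ) := by
  intro Q R hQR z
  unfold bellman
  gcongr with x'
  · exact hP0 _ _ _
  · exact minOverActions_mono hQR x'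

theorem bellman_add_const_le [IsOrderedRing K] (hP1 : ∀ u x, ∑ x', P u x x' ≤ 1)
    (hγ0 : 0 ≤ γ) (Q : X × U → K) {d : K} (hd : 0 ≤ d) :
    bellman P c γ (Q + Function.const _ d) ≤ bellman P c γ Q + Function.const _ (γ * d) := by
  rintro ⟨x, u⟩
  have sum_le : ∑ x', P u x x' * minOverActions (Q + Function.const _ d) x' ≤
      ∑ x', P u x x' * minOverActions Q x' + d :=
    calc ∑ x', P u x x' * minOverActions (Q + Function.const _ d) x'
        = ∑ x', P u x x' * minOverActions Q x' + (∑ x', P u x x') * d := by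
          simp only [minOverActions_add_const, Pi.add_apply, Function.const_apply, mul_add,
            sum_add_distrib, sum_mul]
      _ ≤ ∑ x', P u x x' * minOverActions Q x' + d := by
          gcongr
          exact mul_le_of_le_one_left hd (hP1 u x)
  calc bellman P c γ (Q + Function.const _ d) (x, u)
      ≤ c (x, u) + γ * (∑ x', P u x x' * minOverActions Q x' + d) := by
        unfold bellman
        gcongr
    _ = bellman P c γ Q (x, u) + γ * d := by rw [mul_add, ← add_assoc, bellman]

variable [IsStrictOrderedRing K]

theorem le_of_le_bellman_of_bellman_le (hP0 : ∀ u x x', 0 ≤ P u x x')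
    (hP1 : ∀ u x, ∑ x', P u x x' ≤ 1) (hγ0 : 0 ≤ γ) (hγ1 : γ < 1) {Q R : X × U → K}
    (hQ : Q ≤ bellman P c γ Q) (hR : bellman P c γ R ≤ R) : Q ≤ R :=
  le_of_le_map_of_map_le_of_discounting hγ1 (bellman_mono hP0 hγ0)
    (fun Q _ hd => bellman_add_const_le hP1 hγ0 Q hd) hQ hR

theorem stmt3_general (hP0 : ∀ u x x', 0 ≤ P u x x') (hP1 : ∀ u x, ∑ x', P u x x' ≤ 1)
    (hγ0 : 0 ≤ γ) (hγ1 : γ < 1) {Qstar : X × U → K}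
    (hQstar : Function.IsFixedPt (bellman P c γ) Qstar) {μ : X × U → K} (hμ0 : 0 ≤ μ) :
    Qstar ≤ bellman P c γ Qstar ∧
      ∀ Q, Q ≤ bellman P c γ Q → ∑ z, μ z * Q z ≤ ∑ z, μ z * Qstar z :=
  ⟨hQstar.ge, fun _ hQ => dotProduct_le_dotProduct_of_nonneg_left
    (le_of_le_bellman_of_bellman_le hP0 hP1 hγ0 hγ1 hQ hQstar.le) hμ0⟩

end Bellman

/-- Manne LP characterization: for any pmf `μ` on `Z = X × U`, the fixed point `Q*` of
the discounted Bellman operator solves `max ⟨μ,Q⟩ s.t. Q(z) ≤ (T Q)(z) ∀ z`: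
`Q*` is feasible, and every feasible `Q` satisfies `⟨μ,Q⟩ ≤ ⟨μ,Q*⟩`. -/
theorem stmt3 {X U : Type*} [Fintype X] [Fintype U] [Nonempty X] [Nonempty U]
    (P : U → X → X → ℝ)
    (hP0 : ∀ u x x', 0 ≤ P u x x') (hP1 : ∀ u x, ∑ x' : X, P u x x' = 1)
    (c : X × U → ℝ) (hc : ∀ z, 0 ≤ c z)
    (γ : ℝ) (hγ0 : 0 < γ) (hγ1 : γ < 1)
    (Qstar : X × U → ℝ)
    (hQstar : ∀ x u, Qstar (x, u) = c (x, u) + γ * ∑ x' : X, P u x x' *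
      (univ.inf' univ_nonempty fun u' : U => Qstar (x', u')))
    (μ : X × U → ℝ) (hμ0 : ∀ z, 0 ≤ μ z) (hμ1 : ∑ z : X × U, μ z = 1) :
    (∀ x u, Qstar (x, u) ≤ c (x, u) + γ * ∑ x' : X, P u x x' *
      (univ.inf' univ_nonempty fun u' : U => Qstar (x', u'))) ∧
    ∀ Q : X × U → ℝ,
      (∀ x u, Q (x, u) ≤ c (x, u) + γ * ∑ x' : X, P u x x' *
        (univ.inf' univ_nonempty fun u' : U => Q (x', u'))) →
      ∑ z : X × U, μ z * Q z ≤ ∑ z : X × U, μ z * Qstar z := by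
  have h := stmt3_general hP0 (fun u x => (hP1 u x).le) hγ0.le hγ1
    (funext fun z => (hQstar z.1 z.2).symm) hμ0
  exact ⟨fun x u => h.1 (x, u), fun Q hQ => h.2 Q fun z => hQ z.1 z.2⟩
end

section
/- (Compactness of the constraint region.) Let X and U be nonempty finite sets, Z := X × U, let T be a row-stochastic matrix on Z with invariant pmf ϖ (ϖ(z') = Σ_z ϖ(z) T(z,z') for all z'), let c : Z → ℝ be nonnegative, γ ∈ (0,1), and ψ : Z → ℝ^d. Define Θ := {θ ∈ ℝ^d : for every z = (x,u) with ϖ(z) > 0, θᵀψ(z) ≤ c(z) + γ Σ_{z'=(x',u')} T(z,z') · min_{u'' ∈ U} θᵀψ(x',u'')}. If for every nonzero v ∈ ℝ^d there exists z ∈ Z with ϖ(z) > 0 and vᵀψ(z) < 0, then Θ is compact. -/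
open Finset

/-!
Evaluate the constraint at a state `z` of the support of `ϖ` where `θᵀψ` is largest on that
support. By invariance the chain never leaves the support, so the expected minimum on the right
is at most `θᵀψ(z)`, and the discount `γ < 1` gives the bound `θᵀψ ≤ max c / (1 - γ)` on the whole
support, uniformly in `θ`. By hypothesis some `ψ(z)` of the support is positive in each nonzero
direction, so `∑ z, max (θᵀψ(z)) 0` is a positively homogeneous function vanishing only at `0`;
it dominates a multiple of the norm, and bounding it bounds `θ`.
-/

section PositivelyHomogeneous

variable {E : Type*} [NormedAddCommGroup E] [NormedSpace ℝ E] [FiniteDimensional ℝ E]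

theorem exists_pos_mul_norm_le_of_posHomogeneous {g : E → ℝ} (hg : Continuous g)
    (hsmul : ∀ r : ℝ, 0 ≤ r → ∀ v, g (r • v) = r * g v) (hpos : ∀ v, v ≠ 0 → 0 < g v) :
    ∃ δ > 0, ∀ v, δ * ‖v‖ ≤ g v := by
  have := FiniteDimensional.proper_real E
  obtain ⟨δ, hδ, hδg⟩ := (isCompact_sphere (0 : E) 1).exists_forall_le' hg.continuousOn
    fun v hv => hpos v (ne_zero_of_mem_unit_sphere ⟨v, hv⟩)
  refine ⟨δ, hδ, fun v => ?_⟩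
  rcases eq_or_ne v 0 with rfl | hv
  · simpa using (hsmul 0 le_rfl 0).ge
  have hunit : ‖v‖⁻¹ • v ∈ Metric.sphere (0 : E) 1 := by
    simpa using norm_smul_inv_norm (𝕜 := ℝ) hv
  calc δ * ‖v‖ ≤ g (‖v‖⁻¹ • v) * ‖v‖ := by gcongr; exact hδg _ hunit
    _ = g v := by
      rw [hsmul _ (by positivity), mul_right_comm, inv_mul_cancel₀ (norm_ne_zero_iff.2 hv), one_mul]

theorem isBounded_setOf_forall_apply_le {ι : Type*} [Finite ι] (φ : ι → E →ₗ[ℝ] ℝ)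
    (hφ : ∀ v, v ≠ 0 → ∃ i, 0 < φ i v) (b : ι → ℝ) :
    Bornology.IsBounded {v : E | ∀ i, φ i v ≤ b i} := by
  have := Fintype.ofFinite ι
  have hcont : Continuous fun v => ∑ i, max (φ i v) 0 :=
    continuous_finsetSum _ fun i _ => (φ i).continuous_of_finiteDimensional.max continuous_const
  have hsmul (r : ℝ) (hr : 0 ≤ r) (v : E) :
      ∑ i, max (φ i (r • v)) 0 = r * ∑ i, max (φ i v) 0 := by
    simp [mul_sum, mul_max_of_nonneg _ _ hr]
  have hpos (v : E) (hv : v ≠ 0) : 0 < ∑ i, max (φ i v) 0 := by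
    obtain ⟨i, hi⟩ := hφ v hv
    exact sum_pos' (fun _ _ => le_max_right _ _) ⟨i, mem_univ i, lt_max_of_lt_left hi⟩
  obtain ⟨δ, hδ, hδφ⟩ := exists_pos_mul_norm_le_of_posHomogeneous hcont hsmul hpos
  refine isBounded_iff_forall_norm_le.2 ⟨(∑ i, max (b i) 0) / δ, fun v hv => ?_⟩
  rw [le_div_iff₀' hδ]
  exact (hδφ v).trans (sum_le_sum fun i _ => max_le_max_right 0 (hv i))

end PositivelyHomogeneous

section MarkovChain

variable {Z : Type*} [Fintype Z] {T : Z → Z → ℝ}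

theorem pos_of_pos_of_transition_pos {μ : Z → ℝ} (hT : ∀ z z', 0 ≤ T z z') (hμ : ∀ z, 0 ≤ μ z)
    (hle : ∀ z', ∑ z, μ z * T z z' ≤ μ z') {z z' : Z} (hz : 0 < μ z) (hzz' : 0 < T z z') :
    0 < μ z' :=
  (sum_pos' (fun w _ => mul_nonneg (hμ w) (hT w z')) ⟨z, mem_univ z, mul_pos hz hzz'⟩).trans_le
    (hle z')

theorem sum_mul_le_of_forall_pos_imp_le {w f : Z → ℝ} {b : ℝ} (hw : ∀ z, 0 ≤ w z)
    (hw1 : ∑ z, w z = 1) (hf : ∀ z, 0 < w z → f z ≤ b) : ∑ z, w z * f z ≤ b :=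
  calc ∑ z, w z * f z ≤ ∑ z, w z * b := sum_le_sum fun z _ => by
        rcases (hw z).eq_or_lt with h0 | hpos
        · simp [← h0]
        · exact mul_le_mul_of_nonneg_left (hf z hpos) hpos.le
    _ = b := by rw [← sum_mul, hw1, one_mul]

theorem le_div_one_sub_of_le_add_mul_sum (hT : ∀ z z', 0 ≤ T z z') (hT1 : ∀ z, ∑ z', T z z' = 1)
    {S : Set Z} (hS : ∀ z ∈ S, ∀ z', 0 < T z z' → z' ∈ S) {γ : ℝ} (hγ0 : 0 ≤ γ) (hγ1 : γ < 1)
    {f : Z → ℝ} {C : ℝ} (hf : ∀ z ∈ S, f z ≤ C + γ * ∑ z', T z z' * f z') {z : Z} (hz : z ∈ S) :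
    f z ≤ C / (1 - γ) := by
  obtain ⟨m, hm, hmax⟩ := S.exists_max_image f S.toFinite ⟨z, hz⟩
  have hmean : ∑ z', T m z' * f z' ≤ f m :=
    sum_mul_le_of_forall_pos_imp_le (hT m) (hT1 m) fun z' hz' => hmax z' (hS m hm z' hz')
  have hstep : f m ≤ C + γ * f m := (hf m hm).trans (by gcongr)
  refine (hmax z hz).trans ((le_div_iff₀ (sub_pos.2 hγ1)).2 ?_)
  linarith

end MarkovChain

theorem stmt12_general {X U E : Type*} [Fintype X] [Fintype U] [Nonempty U]
    [NormedAddCommGroup E] [NormedSpace ℝ E] [FiniteDimensional ℝ E]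
    {T : X × U → X × U → ℝ} (hT : ∀ z z', 0 ≤ T z z') (hT1 : ∀ z, ∑ z', T z z' = 1)
    {S : Set (X × U)} (hS : ∀ z ∈ S, ∀ z', 0 < T z z' → z' ∈ S)
    (c : X × U → ℝ) {γ : ℝ} (hγ0 : 0 ≤ γ) (hγ1 : γ < 1) (φ : X × U → E →ₗ[ℝ] ℝ)
    (hφ : ∀ v, v ≠ 0 → ∃ z ∈ S, φ z v < 0) :
    IsCompact {θ : E | ∀ z ∈ S, φ z θ ≤ c z + γ * ∑ z', T z z' *
      univ.inf' univ_nonempty fun u => φ (z'.1, u) θ} := by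
  have := FiniteDimensional.proper_real E
  have hcont (z : X × U) : Continuous (φ z) := (φ z).continuous_of_finiteDimensional
  refine Metric.isCompact_of_isClosed_isBounded ?_ ?_
  · simp only [Set.ofPred_forall]
    refine isClosed_biInter fun z _ => isClosed_le (hcont z) ?_
    have hmin (x : X) : Continuous fun θ => univ.inf' univ_nonempty fun u => φ (x, u) θ :=
      Continuous.finset_inf'_apply _ fun u _ => hcont (x, u)
    exact continuous_const.add (continuous_const.mul
      (continuous_finsetSum _ fun z' _ => continuous_const.mul (hmin z'.1)))
  · obtain ⟨C, hC⟩ := (Set.finite_range c).bddAbove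
    have hpos (v : E) (hv : v ≠ 0) : ∃ z : S, 0 < φ z v := by
      obtain ⟨z, hz, hlt⟩ := hφ (-v) (neg_ne_zero.2 hv)
      exact ⟨⟨z, hz⟩, by simpa using hlt⟩
    refine (isBounded_setOf_forall_apply_le (fun z : S => φ z) hpos fun _ => C / (1 - γ)).subset
      fun θ hθ z => le_div_one_sub_of_le_add_mul_sum hT hT1 hS hγ0 hγ1 (f := fun z => φ z θ)
        (fun z hz => (hθ z hz).trans ?_) z.2
    gcongr with z'
    · exact hC (Set.mem_range_self z)
    · exact hT z z'
    · exact inf'_le (fun u => φ (z'.1, u) θ) (mem_univ z'.2)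

/-- Compactness of the constraint region: if for every nonzero `v ∈ ℝ^d` there exists
`z` with `ϖ(z) > 0` and `vᵀψ(z) < 0`, then the constraint set `Θ` is compact. -/
theorem stmt12 {X U : Type*} [Fintype X] [Fintype U] [Nonempty X] [Nonempty U]
    (T : X × U → X × U → ℝ)
    (hT0 : ∀ z z', 0 ≤ T z z') (hT1 : ∀ z, ∑ z' : X × U, T z z' = 1)
    (ϖ : X × U → ℝ) (hϖ0 : ∀ z, 0 ≤ ϖ z) (hϖ1 : ∑ z : X × U, ϖ z = 1)
    (hinv : ∀ z' : X × U, ϖ z' = ∑ z : X × U, ϖ z * T z z')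
    (c : X × U → ℝ) (hc : ∀ z, 0 ≤ c z)
    (γ : ℝ) (hγ0 : 0 < γ) (hγ1 : γ < 1)
    (d : ℕ) (ψ : X × U → Fin d → ℝ)
    (hpe : ∀ v : Fin d → ℝ, v ≠ 0 → ∃ z : X × U, 0 < ϖ z ∧ ∑ i, v i * ψ z i < 0) :
    IsCompact {θ : Fin d → ℝ |
      ∀ z : X × U, 0 < ϖ z →
        ∑ i, θ i * ψ z i ≤ c z + γ * ∑ z' : X × U, T z z' *
          (univ.inf' univ_nonempty fun u'' : U => ∑ i, θ i * ψ (z'.1, u'') i)} :=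
  stmt12_general (S := {z | 0 < ϖ z}) hT0 hT1
    (fun _ hz _ => pos_of_pos_of_transition_pos hT0 hϖ0 (fun z' => (hinv z').ge) hz) c hγ0.le hγ1
    (fun z => (dotProductBilin ℝ ℝ).flip (ψ z)) hpe
end

section
/- (Tight constraints transfer to the greedy policy.) Suppose θ ∈ ℝ^d satisfies ḡ(θ,φ') ≤ 0 componentwise for every deterministic policy φ' : X → U. If ḡ^i(θ,φ) = 0 for some index i ∈ {1,…,d̄} and some policy φ, then ḡ^i(θ,φ_g) = 0 for every Q^θ-greedy policy φ_g. -/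
open Finset MeasureTheory

/-- Linearly parameterized Q-function: `Q^θ(z) = θᵀψ(z)`. -/
noncomputable def Qlin {X U : Type*} {d : ℕ} (ψ : X × U → Fin d → ℝ)
    (θ : Fin d → ℝ) : X × U → ℝ :=
  fun z => ∑ i, θ i * ψ z i

/-- Temporal difference `𝒟(θ) = −Q^θ(Z) + c(Z) + γ min_u Q^θ(X',u)`. -/
noncomputable def Dtd {Ω X U : Type*} [Fintype U] [Nonempty U] {d : ℕ}
    (ψ : X × U → Fin d → ℝ) (c : X × U → ℝ) (γ : ℝ)
    (Z : Ω → X × U) (X' : Ω → X) (θ : Fin d → ℝ) (ω : Ω) : ℝ :=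
  -(Qlin ψ θ (Z ω)) + c (Z ω) +
    γ * (univ.inf' univ_nonempty fun u : U => Qlin ψ θ (X' ω, u))

/-- Temporal difference for a deterministic policy `φ`:
`𝒟(θ,φ) = −Q^θ(Z) + c(Z) + γ Q^θ(X',φ(X'))`. -/
noncomputable def DtdPol {Ω X U : Type*} {d : ℕ}
    (ψ : X × U → Fin d → ℝ) (c : X × U → ℝ) (γ : ℝ)
    (Z : Ω → X × U) (X' : Ω → X) (θ : Fin d → ℝ) (φ : X → U) (ω : Ω) : ℝ :=
  -(Qlin ψ θ (Z ω)) + c (Z ω) + γ * Qlin ψ θ (X' ω, φ (X' ω))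

/-- `ḡ(θ) := E[−𝒟(θ) ζ] ∈ ℝ^{d̄}`. -/
noncomputable def gbar {Ω X U : Type*} [MeasurableSpace Ω] [Fintype U] [Nonempty U]
    {d dbar : ℕ} (P : Measure Ω) (ψ : X × U → Fin d → ℝ) (c : X × U → ℝ) (γ : ℝ)
    (Z : Ω → X × U) (X' : Ω → X) (ζ : Ω → Fin dbar → ℝ) (θ : Fin d → ℝ) :
    Fin dbar → ℝ :=
  fun i => ∫ ω, -(Dtd ψ c γ Z X' θ ω) * ζ ω i ∂P

/-- `ḡ(θ,φ) := E[−𝒟(θ,φ) ζ] ∈ ℝ^{d̄}`. -/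
noncomputable def gbarPol {Ω X U : Type*} [MeasurableSpace Ω] {d dbar : ℕ}
    (P : Measure Ω) (ψ : X × U → Fin d → ℝ) (c : X × U → ℝ) (γ : ℝ)
    (Z : Ω → X × U) (X' : Ω → X) (ζ : Ω → Fin dbar → ℝ) (θ : Fin d → ℝ) (φ : X → U) :
    Fin dbar → ℝ :=
  fun i => ∫ ω, -(DtdPol ψ c γ Z X' θ φ ω) * ζ ω i ∂P

theorem integrable_comp_mul_of_finite {Ω S R : Type*} [MeasurableSpace Ω] {P : Measure Ω}
    [Finite S] [MeasurableSpace S] [MeasurableSingletonClass S] [NormedRing R]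
    {W : Ω → S} (hW : AEMeasurable W P) (F : S → R) {f : Ω → R} (hf : Integrable f P) :
    Integrable (fun ω => F (W ω) * f ω) P := by
  obtain ⟨B, hB⟩ := Finite.exists_le fun s => ‖F s‖
  exact hf.bdd_mul (StronglyMeasurable.of_discrete.aestronglyMeasurable.comp_aemeasurable hW)
    (.of_forall fun ω => hB (W ω))

section

variable {Ω X U : Type*} {d : ℕ} {ψ : X × U → Fin d → ℝ} {c : X × U → ℝ} {γ : ℝ}
  {Z : Ω → X × U} {X' : Ω → X} {θ : Fin d → ℝ} {φ φ' : X → U}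

theorem DtdPol_le_DtdPol (hγ : 0 ≤ γ) {ω : Ω}
    (hQ : Qlin ψ θ (X' ω, φ' (X' ω)) ≤ Qlin ψ θ (X' ω, φ (X' ω))) :
    DtdPol ψ c γ Z X' θ φ' ω ≤ DtdPol ψ c γ Z X' θ φ ω := by
  unfold DtdPol
  gcongr

variable [MeasurableSpace Ω] {P : Measure Ω}

theorem integrable_neg_DtdPol_mul [Finite X] [MeasurableSpace X] [MeasurableSingletonClass X]
    [Finite U] [MeasurableSpace U] [MeasurableSingletonClass U]
    (hZ : AEMeasurable Z P) (hX' : AEMeasurable X' P) {f : Ω → ℝ} (hf : Integrable f P) :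
    Integrable (fun ω => -(DtdPol ψ c γ Z X' θ φ ω) * f ω) P :=
  integrable_comp_mul_of_finite (hZ.prodMk hX')
    (fun p => -(-(Qlin ψ θ p.1) + c p.1 + γ * Qlin ψ θ (p.2, φ p.2))) hf

variable {dbar : ℕ} {ζ : Ω → Fin dbar → ℝ} {i : Fin dbar}

theorem gbarPol_le_gbarPol (hγ : 0 ≤ γ) (hζ : ∀ᵐ ω ∂P, 0 ≤ ζ ω i)
    (hint : Integrable (fun ω => -(DtdPol ψ c γ Z X' θ φ ω) * ζ ω i) P)
    (hint' : Integrable (fun ω => -(DtdPol ψ c γ Z X' θ φ' ω) * ζ ω i) P)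
    (hQ : ∀ x, Qlin ψ θ (x, φ' x) ≤ Qlin ψ θ (x, φ x)) :
    gbarPol P ψ c γ Z X' ζ θ φ i ≤ gbarPol P ψ c γ Z X' ζ θ φ' i := by
  refine integral_mono_ae hint hint' ?_
  filter_upwards [hζ] with ω hω
  exact mul_le_mul_of_nonneg_right (neg_le_neg (DtdPol_le_DtdPol hγ (hQ (X' ω)))) hω

theorem stmt14_general (hγ : 0 ≤ γ) (hζ : ∀ᵐ ω ∂P, 0 ≤ ζ ω i)
    (hint : Integrable (fun ω => -(DtdPol ψ c γ Z X' θ φ ω) * ζ ω i) P)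
    (hint' : Integrable (fun ω => -(DtdPol ψ c γ Z X' θ φ' ω) * ζ ω i) P)
    (hQ : ∀ x, Qlin ψ θ (x, φ' x) ≤ Qlin ψ θ (x, φ x))
    (hfeas : gbarPol P ψ c γ Z X' ζ θ φ' i ≤ 0)
    (htight : gbarPol P ψ c γ Z X' ζ θ φ i = 0) :
    gbarPol P ψ c γ Z X' ζ θ φ' i = 0 :=
  hfeas.antisymm (htight.ge.trans (gbarPol_le_gbarPol hγ hζ hint hint' hQ))

end

/-- Tight constraints transfer to the greedy policy: if `ḡ(θ,φ') ≤ 0` for every policy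
`φ'`, and `ḡ^i(θ,φ) = 0` for some index `i` and some policy `φ`, then `ḡ^i(θ,φ_g) = 0`
for every `Q^θ`-greedy policy `φ_g`. -/
theorem stmt14 {Ω X U : Type*} [MeasurableSpace Ω]
    [MeasurableSpace X] [DiscreteMeasurableSpace X]
    [MeasurableSpace U] [DiscreteMeasurableSpace U]
    [Fintype X] [Fintype U] [Nonempty X] [Nonempty U]
    (P : Measure Ω) [IsProbabilityMeasure P]
    (c : X × U → ℝ) (hc : ∀ z, 0 ≤ c z)
    (γ : ℝ) (hγ0 : 0 < γ) (hγ1 : γ < 1)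
    (d dbar : ℕ) (hdbar : 1 ≤ dbar)
    (ψ : X × U → Fin d → ℝ)
    (Z : Ω → X × U) (X' : Ω → X) (hZ : Measurable Z) (hX' : Measurable X')
    (ζ : Ω → Fin dbar → ℝ) (hζmeas : Measurable ζ)
    (hζ0 : ∀ ω i, 0 ≤ ζ ω i) (hζbdd : ∃ C : ℝ, ∀ ω i, ζ ω i ≤ C)
    (θ : Fin d → ℝ)
    (hfeas : ∀ (φ' : X → U) (i : Fin dbar), gbarPol P ψ c γ Z X' ζ θ φ' i ≤ 0)
    (i : Fin dbar) (φ : X → U) (htight : gbarPol P ψ c γ Z X' ζ θ φ i = 0) :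
    ∀ φg : X → U,
      (∀ x, Qlin ψ θ (x, φg x) = univ.inf' univ_nonempty fun u : U => Qlin ψ θ (x, u)) →
      gbarPol P ψ c γ Z X' ζ θ φg i = 0 := by
  intro φg hg
  obtain ⟨C, hC⟩ := hζbdd
  have hζi : Integrable (fun ω => ζ ω i) P :=
    .of_mem_Icc 0 C hζmeas.eval.aemeasurable (.of_forall fun ω => ⟨hζ0 ω i, hC ω i⟩)
  have hint (φ' : X → U) : Integrable (fun ω => -(DtdPol ψ c γ Z X' θ φ' ω) * ζ ω i) P :=
    integrable_neg_DtdPol_mul hZ.aemeasurable hX'.aemeasurable hζi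
  have hQ (x : X) : Qlin ψ θ (x, φg x) ≤ Qlin ψ θ (x, φ x) :=
    (hg x).trans_le (inf'_le _ (mem_univ (φ x)))
  exact stmt14_general hγ0.le (.of_forall (hζ0 · i)) (hint φ) (hint φg) hQ (hfeas φg i) htight
end

section
/- (Uniqueness of the greedy policy at a basic feasible solution.) Suppose θ ∈ ℝ^d satisfies ḡ(θ,φ') ≤ 0 componentwise for every deterministic policy φ' : X → U, and suppose the set of tight pairs {(i,φ) : 1 ≤ i ≤ d̄, φ : X → U, ḡ^i(θ,φ) = 0} has exactly d elements whose indices i are pairwise distinct, where d ≥ 1. Then Q^θ admits exactly one greedy policy: there is a unique φ : X → U with Q^θ(x,φ(x)) = min_{u ∈ U} Q^θ(x,u) for all x ∈ X. -/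
open Finset MeasureTheory

/-- The policy `φ` is greedy for `Q`: in every state it picks a minimizer of `Q`. Phrased with
inequalities, which avoids taking a minimum over `U` and so makes sense for infinite `U`. -/
def IsGreedy {X U : Type*} (Q : X × U → ℝ) (φ : X → U) : Prop :=
  ∀ x u, Q (x, φ x) ≤ Q (x, u)

section Greedy

variable {X U : Type*} {Q : X × U → ℝ}

theorem isGreedy_iff_eq_inf' [Fintype U] [Nonempty U] {φ : X → U} :
    IsGreedy Q φ ↔ ∀ x, Q (x, φ x) = univ.inf' univ_nonempty fun u : U => Q (x, u) := by
  refine forall_congr' fun x => ⟨fun h => ?_, fun h u => ?_⟩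
  · exact le_antisymm (le_inf' _ _ fun u _ => h u) (inf'_le _ (mem_univ (φ x)))
  · exact h.trans_le (inf'_le _ (mem_univ u))

theorem exists_isGreedy [Finite U] [Nonempty U] (Q : X × U → ℝ) : ∃ φ : X → U, IsGreedy Q φ := by
  choose φ hφ using fun x => Finite.exists_min fun u => Q (x, u)
  exact ⟨φ, hφ⟩

end Greedy

theorem integrable_comp_mul_of_finite_s15 {Ω α : Type*} [MeasurableSpace Ω] [MeasurableSpace α]
    [Finite α] [DiscreteMeasurableSpace α] {μ : Measure Ω} {T : Ω → α} (hT : Measurable T)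
    (f : α → ℝ) {Y : Ω → ℝ} (hY : Integrable Y μ) :
    Integrable (fun ω => f (T ω) * Y ω) μ := by
  obtain ⟨C, hC⟩ := Finite.exists_le fun a => ‖f a‖
  have hfT : Measurable fun ω => f (T ω) := Measurable.of_discrete.comp hT
  exact hY.bdd_mul hfT.aestronglyMeasurable (ae_of_all _ fun ω => hC (T ω))

section TemporalDifference

variable {Ω X U : Type*} {d dbar : ℕ} {ψ : X × U → Fin d → ℝ} {c : X × U → ℝ} {γ : ℝ}
  {Z : Ω → X × U} {X' : Ω → X} {ζ : Ω → Fin dbar → ℝ} {θ : Fin d → ℝ} {φ φ' : X → U}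
  {i : Fin dbar}

theorem dtdPol_le_dtdPol_of_isGreedy (hγ : 0 ≤ γ) (hφ : IsGreedy (Qlin ψ θ) φ) (ω : Ω) :
    DtdPol ψ c γ Z X' θ φ ω ≤ DtdPol ψ c γ Z X' θ φ' ω := by
  unfold DtdPol
  gcongr
  exact hφ _ _

variable [MeasurableSpace Ω] {P : Measure Ω}

theorem integrable_neg_dtdPol_mul [MeasurableSpace X] [DiscreteMeasurableSpace X]
    [MeasurableSpace U] [DiscreteMeasurableSpace U] [Finite X] [Finite U]
    (hZ : Measurable Z) (hX' : Measurable X') {Y : Ω → ℝ} (hY : Integrable Y P) :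
    Integrable (fun ω => -(DtdPol ψ c γ Z X' θ φ ω) * Y ω) P :=
  integrable_comp_mul_of_finite_s15 (hZ.prodMk hX')
    (fun p => -(-(Qlin ψ θ p.1) + c p.1 + γ * Qlin ψ θ (p.2, φ p.2))) hY

theorem gbarPol_le_gbarPol_of_isGreedy (hγ : 0 ≤ γ) (hζ : ∀ᵐ ω ∂P, 0 ≤ ζ ω i)
    (hint : Integrable (fun ω => -(DtdPol ψ c γ Z X' θ φ ω) * ζ ω i) P)
    (hint' : Integrable (fun ω => -(DtdPol ψ c γ Z X' θ φ' ω) * ζ ω i) P)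
    (hφ : IsGreedy (Qlin ψ θ) φ) :
    gbarPol P ψ c γ Z X' ζ θ φ' i ≤ gbarPol P ψ c γ Z X' ζ θ φ i := by
  refine integral_mono_ae hint' hint ?_
  filter_upwards [hζ] with ω hω
  exact mul_le_mul_of_nonneg_right (neg_le_neg (dtdPol_le_dtdPol_of_isGreedy hγ hφ ω)) hω

/-- A tight constraint at a feasible `θ` attains the maximum of `ḡ^i(θ,·)`, and so does every
greedy policy. Hence a tight pair `(i,φ)` stays tight when `φ` is replaced by a greedy policy, and
distinctness of the tight indices leaves room for only one of these. -/
theorem stmt15_general [Finite U] [Nonempty U] (hγ : 0 ≤ γ) (hζ : ∀ i, ∀ᵐ ω ∂P, 0 ≤ ζ ω i)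
    (hint : ∀ (φ : X → U) (i : Fin dbar),
      Integrable (fun ω => -(DtdPol ψ c γ Z X' θ φ ω) * ζ ω i) P)
    (hfeas : ∀ (φ : X → U) (i : Fin dbar), gbarPol P ψ c γ Z X' ζ θ φ i ≤ 0)
    (htight : {p : Fin dbar × (X → U) | gbarPol P ψ c γ Z X' ζ θ p.2 p.1 = 0}.Nonempty)
    (hdistinct : Set.InjOn Prod.fst
      {p : Fin dbar × (X → U) | gbarPol P ψ c γ Z X' ζ θ p.2 p.1 = 0}) :
    ∃! φ : X → U, IsGreedy (Qlin ψ θ) φ := by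
  obtain ⟨⟨i, φ₀⟩, hφ₀ : gbarPol P ψ c γ Z X' ζ θ φ₀ i = 0⟩ := htight
  have greedy_tight {φ : X → U} (hφ : IsGreedy (Qlin ψ θ) φ) :
      gbarPol P ψ c γ Z X' ζ θ φ i = 0 :=
    le_antisymm (hfeas φ i) <|
      hφ₀.ge.trans (gbarPol_le_gbarPol_of_isGreedy hγ (hζ i) (hint φ i) (hint φ₀ i) hφ)
  obtain ⟨φ, hφ⟩ := exists_isGreedy (Qlin ψ θ)
  refine ⟨φ, hφ, fun φ' hφ' => ?_⟩
  have same_pair : (i, φ') = (i, φ) := hdistinct (greedy_tight hφ') (greedy_tight hφ) rfl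
  exact congrArg Prod.snd same_pair

end TemporalDifference

/-- Uniqueness of the greedy policy at a basic feasible solution: if `ḡ(θ,φ') ≤ 0` for
every policy `φ'`, and the set of tight pairs `{(i,φ) : ḡ^i(θ,φ) = 0}` has exactly `d`
elements whose indices are pairwise distinct (`d ≥ 1`), then `Q^θ` admits exactly one
greedy policy. -/
theorem stmt15 {Ω X U : Type*} [MeasurableSpace Ω]
    [MeasurableSpace X] [DiscreteMeasurableSpace X]
    [MeasurableSpace U] [DiscreteMeasurableSpace U]
    [Fintype X] [Fintype U] [Nonempty X] [Nonempty U]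
    (P : Measure Ω) [IsProbabilityMeasure P]
    (c : X × U → ℝ) (hc : ∀ z, 0 ≤ c z)
    (γ : ℝ) (hγ0 : 0 < γ) (hγ1 : γ < 1)
    (d dbar : ℕ) (hd : 1 ≤ d) (hdbar : 1 ≤ dbar)
    (ψ : X × U → Fin d → ℝ)
    (Z : Ω → X × U) (X' : Ω → X) (hZ : Measurable Z) (hX' : Measurable X')
    (ζ : Ω → Fin dbar → ℝ) (hζmeas : Measurable ζ)
    (hζ0 : ∀ ω i, 0 ≤ ζ ω i) (hζbdd : ∃ C : ℝ, ∀ ω i, ζ ω i ≤ C)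
    (θ : Fin d → ℝ)
    (hfeas : ∀ (φ' : X → U) (i : Fin dbar), gbarPol P ψ c γ Z X' ζ θ φ' i ≤ 0)
    (hcard : {p : Fin dbar × (X → U) | gbarPol P ψ c γ Z X' ζ θ p.2 p.1 = 0}.ncard = d)
    (hdistinct : Set.InjOn Prod.fst
      {p : Fin dbar × (X → U) | gbarPol P ψ c γ Z X' ζ θ p.2 p.1 = 0}) :
    ∃! φ : X → U,
      ∀ x, Qlin ψ θ (x, φ x) = univ.inf' univ_nonempty fun u : U => Qlin ψ θ (x, u) := by
  obtain ⟨C, hC⟩ := hζbdd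
  have hζint (i : Fin dbar) : Integrable (fun ω => ζ ω i) P :=
    .of_mem_Icc 0 C (by fun_prop) (ae_of_all _ fun ω => ⟨hζ0 ω i, hC ω i⟩)
  have htight := Set.nonempty_of_ncard_ne_zero (hcard.trans_ne (by omega))
  simpa only [isGreedy_iff_eq_inf'] using
    stmt15_general hγ0.le (fun i => ae_of_all _ (hζ0 · i))
      (fun _ i => integrable_neg_dtdPol_mul hZ hX' (hζint i)) hfeas htight hdistinct
end

section
/- (Stability of a nondegenerate LP vertex under perturbation.) Let v ∈ ℝ^d, Ā ∈ ℝ^{d̄×d}, β̄ ∈ ℝ^{d̄} with d̄ ≥ d ≥ 1. Suppose the linear program min vᵀθ subject to Āθ ≤ β̄ has a unique optimal solution θ*; that the active set I₊ := {i : (Āθ*)_i = β̄_i} has exactly d elements; that the d×d matrix Ā⁺ formed from the rows of Ā indexed by I₊ is invertible; and that there exists λ* ∈ ℝ^{d̄} with λ* ≥ 0, Āᵀλ* = −v, λ*_i = 0 for i ∉ I₊, and λ*_i > 0 for every i ∈ I₊. Then there exists δ > 0 such that for all A ∈ ℝ^{d̄×d} and β ∈ ℝ^{d̄} with ‖A −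 Ā‖ < δ and ‖β − β̄‖ < δ, the perturbed linear program min vᵀθ subject to Aθ ≤ β has a unique optimal solution, its active set equals I₊, and this solution equals (A⁺)⁻¹ β⁺, where A⁺ and β⁺ are the rows of A and the entries of β indexed by I₊. -/
open Matrix

/-- A point `θ` is optimal for the LP `min vᵀθ s.t. Aθ ≤ β`. -/
def LPOptimal {d dbar : ℕ} (v : Fin d → ℝ) (A : Matrix (Fin dbar) (Fin d) ℝ)
    (β : Fin dbar → ℝ) (θ : Fin d → ℝ) : Prop :=
  (∀ i, A.mulVec θ i ≤ β i) ∧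
    ∀ θ' : Fin d → ℝ, (∀ i, A.mulVec θ' i ≤ β i) → v ⬝ᵥ θ ≤ v ⬝ᵥ θ'

/-! The nonsingular active submatrix `A⁺` pins down both the vertex `θ₀ = (A⁺)⁻¹ β⁺` and the
multipliers `μ = -v (A⁺)⁻¹`, and every `θ` satisfies `vᵀθ - vᵀθ₀ = ∑ₖ μₖ (β⁺ - A⁺ θ)ₖ`. If `μ > 0`
and the constraints outside `A⁺` are slack at `θ₀`, this identity makes `θ₀` the unique optimum.
Invertibility of `A⁺`, positivity of `μ` and slackness are finitely many strict conditions on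
quantities continuous in `(v, A, β)`, so they survive small perturbations. -/

open Filter Topology

section Algebra

theorem comp_vecMul_submatrix_of_forall_notMem_range {k m n R : Type*} [Fintype k] [Fintype m]
    [NonUnitalNonAssocSemiring R] {ι : k → m} (hι : Function.Injective ι) {lam : m → R}
    (hlam : ∀ i ∉ Set.range ι, lam i = 0) (A : Matrix m n R) :
    (lam ∘ ι) ᵥ* A.submatrix ι id = lam ᵥ* A := by
  ext j
  refine Finset.sum_of_injOn ι hι.injOn (by simp) (fun i _ hi => ?_) fun k _ => rfl
  rw [hlam i (by simpa using hi), zero_mul]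

variable {m n R : Type*} [Fintype n] [DecidableEq n] [CommRing R]

/-- The basic solution of the constraint system `A θ ≤ β` for the basis `ι`: the point at which all
the constraints selected by `ι` are active. If these rows of `A` do not form an invertible matrix,
it is the junk value `0`. -/
noncomputable def basicSolution (A : Matrix m n R) (β : m → R) (ι : n → m) : n → R :=
  (A.submatrix ι id)⁻¹ *ᵥ (β ∘ ι)

/-- The Lagrange multipliers of the constraints selected by `ι` in the program
`min vᵀθ` subject to `A θ ≤ β`, that is, the solution `μ` of `μ A⁺ = -v`, where `A⁺` consists of the
selected rows of `A`. If `A⁺` is not invertible, it is the junk value `0`. -/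
noncomputable def basicMultiplier (v : n → R) (A : Matrix m n R) (ι : n → m) : n → R :=
  -v ᵥ* (A.submatrix ι id)⁻¹

variable {A : Matrix m n R} {β : m → R} {ι : n → m} {v θ μ : n → R}

theorem submatrix_mulVec_basicSolution (hA : IsUnit (A.submatrix ι id).det) :
    A.submatrix ι id *ᵥ basicSolution A β ι = β ∘ ι := by
  rw [basicSolution, mulVec_mulVec, mul_nonsing_inv _ hA, one_mulVec]

theorem eq_basicSolution (hA : IsUnit (A.submatrix ι id).det)
    (hθ : A.submatrix ι id *ᵥ θ = β ∘ ι) : θ = basicSolution A β ι := by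
  rw [basicSolution, ← hθ, mulVec_mulVec, nonsing_inv_mul _ hA, one_mulVec]

theorem basicMultiplier_vecMul_submatrix (hA : IsUnit (A.submatrix ι id).det) :
    basicMultiplier v A ι ᵥ* A.submatrix ι id = -v := by
  rw [basicMultiplier, vecMul_vecMul, nonsing_inv_mul _ hA, vecMul_one]

theorem eq_basicMultiplier (hA : IsUnit (A.submatrix ι id).det)
    (hμ : μ ᵥ* A.submatrix ι id = -v) : μ = basicMultiplier v A ι := by
  rw [basicMultiplier, ← hμ, vecMul_vecMul, mul_nonsing_inv _ hA, vecMul_one]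

theorem dotProduct_sub_dotProduct_basicSolution (hA : IsUnit (A.submatrix ι id).det) :
    v ⬝ᵥ θ - v ⬝ᵥ basicSolution A β ι =
      ∑ k, basicMultiplier v A ι k * (β (ι k) - (A *ᵥ θ) (ι k)) := by
  have cost_eq (η : n → R) :
      v ⬝ᵥ η = -(basicMultiplier v A ι ⬝ᵥ (A.submatrix ι id *ᵥ η)) := by
    rw [dotProduct_mulVec, basicMultiplier_vecMul_submatrix hA, neg_dotProduct, neg_neg]
  calc v ⬝ᵥ θ - v ⬝ᵥ basicSolution A β ι
    _ = basicMultiplier v A ι ⬝ᵥ (β ∘ ι - A.submatrix ι id *ᵥ θ) := by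
        rw [cost_eq θ, cost_eq (basicSolution A β ι), submatrix_mulVec_basicSolution hA,
          dotProduct_sub]
        ring
    _ = ∑ k, basicMultiplier v A ι k * (β (ι k) - (A *ᵥ θ) (ι k)) := rfl

end Algebra

section Order

variable {m n R : Type*} [Fintype n] [DecidableEq n] [CommRing R] [LinearOrder R]

/-- The rows selected by `ι` form a nondegenerate optimal basis of the program `min vᵀθ` subject to
`A θ ≤ β`: they form an invertible matrix, all other constraints are slack at the basic solution,
and the multipliers of the selected constraints are positive. -/
structure IsNondegenerateOptimalBasis (v : n → R) (A : Matrix m n R) (β : m → R) (ι : n → m) :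
    Prop where
  isUnit_det : IsUnit (A.submatrix ι id).det
  slack : ∀ i ∉ Set.range ι, (A *ᵥ basicSolution A β ι) i < β i
  multiplier_pos : ∀ k, 0 < basicMultiplier v A ι k

namespace IsNondegenerateOptimalBasis

variable {v θ : n → R} {A : Matrix m n R} {β : m → R} {ι : n → m}

theorem mulVec_basicSolution_eq_iff (h : IsNondegenerateOptimalBasis v A β ι) {i : m} :
    (A *ᵥ basicSolution A β ι) i = β i ↔ i ∈ Set.range ι := by
  refine ⟨fun hi => by_contra fun hmem => (h.slack i hmem).ne hi, ?_⟩
  rintro ⟨k, rfl⟩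
  exact congrFun (submatrix_mulVec_basicSolution h.isUnit_det) k

theorem mulVec_basicSolution_le (h : IsNondegenerateOptimalBasis v A β ι) (i : m) :
    (A *ᵥ basicSolution A β ι) i ≤ β i := by
  by_cases hi : i ∈ Set.range ι
  · exact (h.mulVec_basicSolution_eq_iff.2 hi).le
  · exact (h.slack i hi).le

variable [IsStrictOrderedRing R]

theorem dotProduct_basicSolution_le (h : IsNondegenerateOptimalBasis v A β ι)
    (hθ : ∀ k, (A *ᵥ θ) (ι k) ≤ β (ι k)) : v ⬝ᵥ basicSolution A β ι ≤ v ⬝ᵥ θ := by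
  rw [← sub_nonneg, dotProduct_sub_dotProduct_basicSolution h.isUnit_det]
  exact Finset.sum_nonneg fun k _ => mul_nonneg (h.multiplier_pos k).le (sub_nonneg.2 (hθ k))

theorem eq_basicSolution_of_dotProduct_le (h : IsNondegenerateOptimalBasis v A β ι)
    (hθ : ∀ k, (A *ᵥ θ) (ι k) ≤ β (ι k)) (hle : v ⬝ᵥ θ ≤ v ⬝ᵥ basicSolution A β ι) :
    θ = basicSolution A β ι := by
  have gap_nonneg (k : n) : 0 ≤ basicMultiplier v A ι k * (β (ι k) - (A *ᵥ θ) (ι k)) :=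
    mul_nonneg (h.multiplier_pos k).le (sub_nonneg.2 (hθ k))
  have gap_sum_eq_zero : ∑ k, basicMultiplier v A ι k * (β (ι k) - (A *ᵥ θ) (ι k)) = 0 := by
    rw [← dotProduct_sub_dotProduct_basicSolution h.isUnit_det, sub_eq_zero]
    exact hle.antisymm (h.dotProduct_basicSolution_le hθ)
  refine eq_basicSolution h.isUnit_det (funext fun k => ?_)
  have gap_eq_zero := (Fintype.sum_eq_zero_iff_of_nonneg gap_nonneg).1 gap_sum_eq_zero
  have slack_eq_zero : β (ι k) - (A *ᵥ θ) (ι k) = 0 :=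
    (mul_eq_zero.1 (congrFun gap_eq_zero k)).resolve_left (h.multiplier_pos k).ne'
  exact (sub_eq_zero.1 slack_eq_zero).symm

end IsNondegenerateOptimalBasis

theorem isNondegenerateOptimalBasis_of_active_eq_range [Fintype m] {v θ : n → R}
    {A : Matrix m n R} {β : m → R} {ι : n → m} {lam : m → R} (hfeas : ∀ i, (A *ᵥ θ) i ≤ β i)
    (hι : Function.Injective ι) (hactive : {i | (A *ᵥ θ) i = β i} = Set.range ι)
    (hA : IsUnit (A.submatrix ι id).det) (hdual : Aᵀ *ᵥ lam = -v)
    (hlam_off : ∀ i ∉ Set.range ι, lam i = 0) (hlam_on : ∀ i ∈ Set.range ι, 0 < lam i) :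
    IsNondegenerateOptimalBasis v A β ι := by
  have mem_range_iff (i : m) : i ∈ Set.range ι ↔ (A *ᵥ θ) i = β i := by
    rw [← hactive, Set.mem_ofPred_eq]
  have hθ : θ = basicSolution A β ι :=
    eq_basicSolution hA (funext fun k => (mem_range_iff _).1 (Set.mem_range_self k))
  have hμ : lam ∘ ι = basicMultiplier v A ι := by
    refine eq_basicMultiplier hA ?_
    rw [comp_vecMul_submatrix_of_forall_notMem_range hι hlam_off, ← mulVec_transpose, hdual]
  refine ⟨hA, fun i hi => ?_, fun k => ?_⟩
  · rw [← hθ]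
    exact (hfeas i).lt_of_ne fun heq => hi ((mem_range_iff i).2 heq)
  · rw [← hμ]
    exact hlam_on _ (Set.mem_range_self k)

end Order

section Topology

section Semiring

variable {α m n R : Type*} [Fintype n] [NonUnitalNonAssocSemiring R] [TopologicalSpace R]
  [IsTopologicalSemiring R] {l : Filter α}

theorem tendsto_mulVec {M : α → Matrix m n R} {x : α → n → R} {M₀ : Matrix m n R} {x₀ : n → R}
    (hM : Tendsto M l (𝓝 M₀)) (hx : Tendsto x l (𝓝 x₀)) :
    Tendsto (fun a => M a *ᵥ x a) l (𝓝 (M₀ *ᵥ x₀)) :=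
  ((continuous_fst.matrix_mulVec continuous_snd).tendsto (M₀, x₀)).comp (hM.prodMk_nhds hx)

theorem tendsto_vecMul {x : α → n → R} {M : α → Matrix n m R} {x₀ : n → R} {M₀ : Matrix n m R}
    (hx : Tendsto x l (𝓝 x₀)) (hM : Tendsto M l (𝓝 M₀)) :
    Tendsto (fun a => x a ᵥ* M a) l (𝓝 (x₀ ᵥ* M₀)) :=
  ((continuous_fst.matrix_vecMul continuous_snd).tendsto (x₀, M₀)).comp (hx.prodMk_nhds hM)

end Semiring

variable {α m n 𝕜 : Type*} [Fintype n] [DecidableEq n] [Field 𝕜] [TopologicalSpace 𝕜]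
  {l : Filter α} {v : α → n → 𝕜} {A : α → Matrix m n 𝕜} {β : α → m → 𝕜}
  {v₀ : n → 𝕜} {A₀ : Matrix m n 𝕜} {β₀ : m → 𝕜} {ι : n → m}

section DivisionRing

variable [IsTopologicalDivisionRing 𝕜]

theorem tendsto_submatrix_inv (hdet : IsUnit (A₀.submatrix ι id).det) (hA : Tendsto A l (𝓝 A₀)) :
    Tendsto (fun a => ((A a).submatrix ι id)⁻¹) l (𝓝 (A₀.submatrix ι id)⁻¹) := by
  have continuousAt_inverse : ContinuousAt Ring.inverse (A₀.submatrix ι id).det := by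
    rw [Ring.inverse_eq_inv']
    exact continuousAt_inv₀ hdet.ne_zero
  exact (continuousAt_matrix_inv _ continuousAt_inverse).tendsto.comp
    (((continuous_id.matrix_submatrix ι id).tendsto A₀).comp hA)

theorem tendsto_basicSolution (hdet : IsUnit (A₀.submatrix ι id).det) (hA : Tendsto A l (𝓝 A₀))
    (hβ : Tendsto β l (𝓝 β₀)) :
    Tendsto (fun a => basicSolution (A a) (β a) ι) l (𝓝 (basicSolution A₀ β₀ ι)) :=
  tendsto_mulVec (tendsto_submatrix_inv hdet hA)
    (tendsto_pi_nhds.2 fun k => hβ.apply_nhds (ι k))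

theorem tendsto_basicMultiplier (hdet : IsUnit (A₀.submatrix ι id).det)
    (hv : Tendsto v l (𝓝 v₀)) (hA : Tendsto A l (𝓝 A₀)) :
    Tendsto (fun a => basicMultiplier (v a) (A a) ι) l (𝓝 (basicMultiplier v₀ A₀ ι)) :=
  tendsto_vecMul hv.neg (tendsto_submatrix_inv hdet hA)

end DivisionRing

theorem IsNondegenerateOptimalBasis.eventually_of_tendsto [Finite m] [LinearOrder 𝕜]
    [IsStrictOrderedRing 𝕜] [OrderTopology 𝕜] (h : IsNondegenerateOptimalBasis v₀ A₀ β₀ ι)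
    (hv : Tendsto v l (𝓝 v₀)) (hA : Tendsto A l (𝓝 A₀)) (hβ : Tendsto β l (𝓝 β₀)) :
    ∀ᶠ a in l, IsNondegenerateOptimalBasis (v a) (A a) (β a) ι := by
  have eventually_det_ne_zero : ∀ᶠ a in l, ((A a).submatrix ι id).det ≠ 0 :=
    (((continuous_id.matrix_submatrix ι id).matrix_det.tendsto A₀).comp hA).eventually_ne
      h.isUnit_det.ne_zero
  have eventually_slack :
      ∀ᶠ a in l, ∀ i ∉ Set.range ι, (A a *ᵥ basicSolution (A a) (β a) ι) i < β a i :=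
    eventually_all.2 fun i => eventually_imp_distrib_left.2 fun hi =>
      ((tendsto_mulVec hA (tendsto_basicSolution h.isUnit_det hA hβ)).apply_nhds i).eventually_lt
        (hβ.apply_nhds i) (h.slack i hi)
  have eventually_multiplier_pos : ∀ᶠ a in l, ∀ k, 0 < basicMultiplier (v a) (A a) ι k :=
    eventually_all.2 fun k =>
      ((tendsto_basicMultiplier h.isUnit_det hv hA).apply_nhds k).eventually_const_lt
        (h.multiplier_pos k)
  filter_upwards [eventually_det_ne_zero, eventually_slack, eventually_multiplier_pos]
    with a det_ne_zero slack multiplier_pos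
  exact ⟨det_ne_zero.isUnit, slack, multiplier_pos⟩

end Topology

theorem exists_forall_abs_sub_lt_of_eventually_nhds {m n : Type*} [Finite m] [Finite n]
    {A₀ : Matrix m n ℝ} {β₀ : m → ℝ} {P : Matrix m n ℝ × (m → ℝ) → Prop}
    (hP : ∀ᶠ p in 𝓝 (A₀, β₀), P p) :
    ∃ δ > (0 : ℝ), ∀ (A : Matrix m n ℝ) (β : m → ℝ),
      (∀ i j, |A i j - A₀ i j| < δ) → (∀ i, |β i - β₀ i| < δ) → P (A, β) := by
  have := Fintype.ofFinite m
  have := Fintype.ofFinite n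
  obtain ⟨δ, hδ, ball_subset⟩ := Metric.eventually_nhds_iff.1
    (show ∀ᶠ p : (m → n → ℝ) × (m → ℝ) in 𝓝 (A₀, β₀), P p from hP)
  refine ⟨δ, hδ, fun A β hA hβ => ball_subset (max_lt ?_ ?_)⟩
  · exact (dist_pi_lt_iff hδ).2 fun i => (dist_pi_lt_iff hδ).2 fun j => hA i j
  · exact (dist_pi_lt_iff hδ).2 hβ

theorem IsNondegenerateOptimalBasis.lpOptimal_iff {d dbar : ℕ} {v θ : Fin d → ℝ}
    {A : Matrix (Fin dbar) (Fin d) ℝ} {β : Fin dbar → ℝ} {ι : Fin d → Fin dbar}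
    (h : IsNondegenerateOptimalBasis v A β ι) :
    LPOptimal v A β θ ↔ θ = basicSolution A β ι := by
  constructor
  · rintro ⟨hfeas, hmin⟩
    exact h.eq_basicSolution_of_dotProduct_le (fun k => hfeas (ι k))
      (hmin _ h.mulVec_basicSolution_le)
  · rintro rfl
    exact ⟨h.mulVec_basicSolution_le,
      fun θ' hθ' => h.dotProduct_basicSolution_le fun k => hθ' (ι k)⟩

/-- Stability of a nondegenerate LP vertex under perturbation: if the LP
`min vᵀθ s.t. Āθ ≤ β̄` has a unique optimal solution `θ*` whose active set `I₊` has
exactly `d` elements (enumerated by the injection `ι`), the corresponding square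
submatrix `Ā⁺` is invertible, and there is a dual vector `λ* ≥ 0` with `Āᵀλ* = −v`
vanishing off `I₊` and strictly positive on `I₊`, then every sufficiently small
perturbation `(A,β)` of `(Ā,β̄)` yields an LP with a unique optimal solution, with the
same active set `I₊`, equal to `(A⁺)⁻¹ β⁺`. -/
theorem stmt16 {d dbar : ℕ} (hd : 1 ≤ d) (hdd : d ≤ dbar)
    (v : Fin d → ℝ) (Abar : Matrix (Fin dbar) (Fin d) ℝ) (βbar : Fin dbar → ℝ)
    (θstar : Fin d → ℝ)
    (hopt : LPOptimal v Abar βbar θstar)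
    (huniq : ∀ θ : Fin d → ℝ, LPOptimal v Abar βbar θ → θ = θstar)
    (ι : Fin d → Fin dbar) (hι : Function.Injective ι)
    (hactive : {i : Fin dbar | Abar.mulVec θstar i = βbar i} = Set.range ι)
    (hAplus : IsUnit (Abar.submatrix ι id).det)
    (lam : Fin dbar → ℝ) (hlam0 : ∀ i, 0 ≤ lam i)
    (hdual : Abarᵀ.mulVec lam = -v)
    (hlamoff : ∀ i, i ∉ Set.range ι → lam i = 0)
    (hlamon : ∀ i, i ∈ Set.range ι → 0 < lam i) :
    ∃ δ > (0 : ℝ), ∀ (A : Matrix (Fin dbar) (Fin d) ℝ) (β : Fin dbar → ℝ),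
      (∀ i j, |A i j - Abar i j| < δ) → (∀ i, |β i - βbar i| < δ) →
      ∃ θN : Fin d → ℝ,
        LPOptimal v A β θN ∧
        (∀ θ : Fin d → ℝ, LPOptimal v A β θ → θ = θN) ∧
        {i : Fin dbar | A.mulVec θN i = β i} = Set.range ι ∧
        θN = (A.submatrix ι id)⁻¹.mulVec (β ∘ ι) := by
  have basis : IsNondegenerateOptimalBasis v Abar βbar ι :=
    isNondegenerateOptimalBasis_of_active_eq_range hopt.1 hι hactive hAplus hdual hlamoff hlamon
  obtain ⟨δ, hδ, basis_of_near⟩ :=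
    exists_forall_abs_sub_lt_of_eventually_nhds
      (basis.eventually_of_tendsto tendsto_const_nhds (continuous_fst.tendsto (Abar, βbar))
        (continuous_snd.tendsto (Abar, βbar)))
  refine ⟨δ, hδ, fun A β hA hβ => ?_⟩
  have perturbed_basis : IsNondegenerateOptimalBasis v A β ι :=
    basis_of_near A β hA hβ
  exact ⟨basicSolution A β ι, perturbed_basis.lpOptimal_iff.2 rfl,
    fun θ => perturbed_basis.lpOptimal_iff.1,
    Set.ext fun i => perturbed_basis.mulVec_basicSolution_eq_iff, rfl⟩
end
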